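/- Let V be a finite-dimensional vector space over a field of characteristic 0 and N a nilpotent endomorphism of V. Then there exists a unique finite increasing filtration (M_i V)_{i∈ℤ} of V such that N(M_i V) ⊆ M_{i−2} V for all i, and for every i ≥ 0 the map N^i induces an isomorphism gr^M_i V → gr^M_{−i} V. -/

import Mathlib

section MonodromyAux

variable {K V : Type*} [Field K] [AddCommGroup V] [Module K V]

/-- The explicit monodromy filtration. -/
def monoF (N : V →ₗ[K] V) (k : ℤ) : Submodule K V :=
  ⨆ i : ℕ, LinearMap.ker (N ^ (k + i + 1).toNat) ⊓ LinearMap.range (N ^ i)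

theorem monoF_mem (N : V →ₗ[K] V) {k : ℤ} (i m : ℕ) (hm : (m : ℤ) ≤ k + i + 1) {z : V}
    (h : (N ^ m) ((N ^ i) z) = 0) : (N ^ i) z ∈ monoF N k := by
  refine Submodule.mem_iSup_of_mem i ⟨?_, ⟨z, rfl⟩⟩
  obtain ⟨c, hc⟩ : ∃ c, (k + i + 1).toNat = c + m := ⟨(k + i + 1).toNat - m, by omega⟩
  simp [hc, pow_add, Module.End.mul_apply, h]

theorem monoF_le (N : V →ₗ[K] V) {k : ℤ} {S : Submodule K V}
    (H : ∀ (i m : ℕ) (z : V), (m : ℤ) = k + i + 1 → 0 < m → (N ^ m) ((N ^ i) z) = 0 →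
      (N ^ i) z ∈ S) : monoF N k ≤ S := by
  refine iSup_le fun i => ?_
  rintro _ ⟨h1, z, rfl⟩
  by_cases hk : 0 < k + i + 1
  · exact H i (k + i + 1).toNat z (by omega) (by omega) (by simpa using h1)
  · have : (k + i + 1).toNat = 0 := by omega
    have h2 : (N ^ i) z = 0 := by simpa [this] using h1
    rw [h2]; exact S.zero_mem

theorem monoF_mono (N : V →ₗ[K] V) : Monotone (monoF N) := by
  intro a b hab
  exact monoF_le N fun i m z hm _ hz => monoF_mem N i m (by omega) hz

theorem monoF_shift (N : V →ₗ[K] V) {k l : ℤ} (hl : l = k - 2) {x : V} (hx : x ∈ monoF N k) :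
    N x ∈ monoF N l := by
  have : monoF N k ≤ (monoF N l).comap N := by
    refine monoF_le N fun i m z hm hm0 hz => ?_
    obtain ⟨m, rfl⟩ := Nat.exists_eq_succ_of_ne_zero hm0.ne'
    have e : N ((N ^ i) z) = (N ^ (i + 1)) z := by
      rw [pow_succ', Module.End.mul_apply]
    rw [Submodule.mem_comap, e]
    refine monoF_mem N (i + 1) m (by push_cast at *; omega) ?_
    rw [← e, ← Module.End.mul_apply, ← pow_succ]; exact hz
  exact this hx

theorem monoF_ker (N : V →ₗ[K] V) {k : ℤ} (m : ℕ) (hm : (m : ℤ) ≤ k + 1) {x : V}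
    (h : (N ^ m) x = 0) : x ∈ monoF N k := by
  simpa using monoF_mem N (k := k) (z := x) 0 m (by simpa using hm) (by simpa using h)

theorem monoF_surj (N : V →ₗ[K] V) (j : ℕ) {l : ℤ} (hl : l = -(j : ℤ)) {y : V}
    (hy : y ∈ monoF N l) : ∃ x ∈ monoF N (j : ℤ), (N ^ j) x = y := by
  have : monoF N l ≤ (monoF N (j : ℤ)).map (N ^ j) := by
    refine monoF_le N fun i m z hm hm0 hz => ?_
    obtain ⟨c, rfl⟩ : ∃ c, i = j + c := ⟨i - j, by omega⟩
    have e : (N ^ (j + c)) z = (N ^ j) ((N ^ c) z) := by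
      rw [pow_add, Module.End.mul_apply]
    refine ⟨(N ^ c) z, monoF_mem N c (m + j) (by push_cast at *; omega) ?_, e.symm⟩
    rw [pow_add, Module.End.mul_apply, ← e]; exact hz
  exact this hy

theorem monoF_inj (N : V →ₗ[K] V) (j : ℕ) {l k : ℤ} (hl : l = -(j : ℤ) - 1)
    (hk : k = (j : ℤ) - 1) {x : V}
    (hx : (N ^ j) x ∈ monoF N l) : x ∈ monoF N k := by
  obtain ⟨z, hz, e⟩ := monoF_surj N (j + 1) (by push_cast; omega) hx
  have h1 : N z ∈ monoF N k := monoF_shift N (by push_cast; omega) hz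
  have h2 : x - N z ∈ monoF N k := by
    refine monoF_ker N j (by omega) ?_
    rw [map_sub, ← e, pow_succ, Module.End.mul_apply, sub_self]
  simpa using add_mem h2 h1

theorem shift_pow (N : V →ₗ[K] V) (M : ℤ → Submodule K V)
    (hs : ∀ i : ℤ, Submodule.map N (M i) ≤ M (i - 2)) (n : ℕ) :
    ∀ (k l : ℤ), l = k - 2 * n → ∀ x ∈ M k, (N ^ n) x ∈ M l := by
  induction n with
  | zero => rintro k l rfl x hx; simpa using hx
  | succ n ih =>
    rintro k l rfl x hx
    rw [pow_succ, Module.End.mul_apply]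
    exact ih (k - 2) _ (by push_cast; ring) _ (hs k ⟨x, hx, rfl⟩)

theorem mono_unique (N : V →ₗ[K] V) (hN : IsNilpotent N) (M : ℤ → Submodule K V)
    (hm : Monotone M) {a b : ℤ} (ha : M a = ⊥) (hb : M b = ⊤)
    (hs : ∀ i : ℤ, Submodule.map N (M i) ≤ M (i - 2))
    (hA : ∀ i : ℕ, ∀ y ∈ M (-(i : ℤ)), ∃ x ∈ M (i : ℤ), (N ^ i) x - y ∈ M (-(i : ℤ) - 1))
    (hB : ∀ i : ℕ, ∀ x ∈ M (i : ℤ), (N ^ i) x ∈ M (-(i : ℤ) - 1) → x ∈ M ((i : ℤ) - 1)) :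
    M = monoF N := by
  obtain ⟨n, hn⟩ := hN
  have ker_le : ∀ (j : ℕ) (x : V), (N ^ (j + 1)) x = 0 → x ∈ M (j : ℤ) := by
    intro j x hx
    have key : ∀ d : ℕ, x ∈ M ((j : ℤ) + d) → x ∈ M (j : ℤ) := by
      intro d
      induction d with
      | zero => intro h; simpa using h
      | succ d ih =>
        intro h
        apply ih
        have := hB (j + d + 1) x (by convert h using 2; push_cast; ring) (by
          have : (N ^ (j + d + 1)) x = 0 := by
            rw [show j + d + 1 = d + (j + 1) by ring, pow_add, Module.End.mul_apply, hx, map_zero]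
          rw [this]; exact zero_mem _)
        convert this using 2; push_cast; ring
    refine key (b - j).toNat (hm (show b ≤ _ by omega) ?_)
    rw [hb]; trivial
  have hFM : ∀ k, monoF N k ≤ M k := by
    intro k
    refine monoF_le N fun i m z hmk hm0 hz => ?_
    refine shift_pow N M hs i ((m + i - 1 : ℕ) : ℤ) k (by omega) z (ker_le _ z ?_)
    rw [show m + i - 1 + 1 = m + i by omega, pow_add, Module.End.mul_apply]; exact hz
  have key : ∀ d j : ℕ, n + a.natAbs ≤ j + d →
      M (j : ℤ) ≤ monoF N j ∧ M (-(j : ℤ)) ≤ monoF N (-(j : ℤ)) := by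
    intro d
    induction d with
    | zero =>
      intro j hj
      refine ⟨fun x _ => monoF_ker N n (by omega) (by simp [hn]), ?_⟩
      have : M (-(j : ℤ)) ≤ M a := hm (by omega)
      rw [ha] at this
      exact this.trans bot_le
    | succ d ih =>
      intro j hj
      have h1 : M (j : ℤ) ≤ monoF N j := by
        intro x hx
        have h := shift_pow N M hs (j + 1) j (-((j + 2 : ℕ) : ℤ)) (by push_cast; ring) x hx
        have h := (ih (j + 2) (by omega)).2 h
        exact monoF_inj N (j + 1) (by push_cast; ring) (by push_cast; ring) h
      refine ⟨h1, fun y hy => ?_⟩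
      obtain ⟨x, hx, hxy⟩ := hA j y hy
      have h2 := (ih (j + 1) (by omega)).2 (by convert hxy using 2; push_cast; ring)
      have h2 := monoF_mono N (show _ ≤ -(j : ℤ) by push_cast; omega) h2
      have h3 : (N ^ j) x ∈ monoF N (-(j : ℤ)) :=
        shift_pow N (monoF N) (by rintro i _ ⟨z, hz, rfl⟩; exact monoF_shift N rfl hz)
          j j _ (by ring) x (h1 hx)
      simpa using sub_mem h3 h2
  funext k
  refine le_antisymm ?_ (hFM k)
  rcases Int.eq_nat_or_neg k with ⟨j, rfl | rfl⟩
  · exact (key (n + a.natAbs) j (by omega)).1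
  · exact (key (n + a.natAbs) j (by omega)).2

end MonodromyAux

/-- Existence and uniqueness of the monodromy filtration of a nilpotent endomorphism `N`
of a finite-dimensional vector space `V` over a field of characteristic `0`:
a finite increasing filtration `M` with `N (M i) ⊆ M (i-2)` such that for every `i ≥ 0`
the map `N^i` induces an isomorphism `gr^M_i V ≃ gr^M_{-i} V` (expressed via the induced
map on quotients `V / M (i-1) → V / M (-i-1)`, which carries the graded piece
`M i / M (i-1)` bijectively onto `M (-i) / M (-i-1)`). -/
theorem stmt2 {K V : Type*} [Field K] [CharZero K] [AddCommGroup V] [Module K V]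
    [FiniteDimensional K V] (N : V →ₗ[K] V) (hN : IsNilpotent N) :
    ∃! M : ℤ → Submodule K V,
      Monotone M ∧ (∃ a : ℤ, M a = ⊥) ∧ (∃ b : ℤ, M b = ⊤) ∧
      (∀ i : ℤ, Submodule.map N (M i) ≤ M (i - 2)) ∧
      (∀ i : ℕ, ∀ h : M ((i : ℤ) - 1) ≤ (M (-(i : ℤ) - 1)).comap (N ^ i),
        Submodule.map (Submodule.mapQ (M ((i : ℤ) - 1)) (M (-(i : ℤ) - 1)) (N ^ i) h)
            ((M (i : ℤ)).map (M ((i : ℤ) - 1)).mkQ)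
          = (M (-(i : ℤ))).map (M (-(i : ℤ) - 1)).mkQ ∧
        ∀ x ∈ (M (i : ℤ)).map (M ((i : ℤ) - 1)).mkQ,
          Submodule.mapQ (M ((i : ℤ) - 1)) (M (-(i : ℤ) - 1)) (N ^ i) h x = 0 → x = 0) := by
  refine ⟨monoF N, ⟨monoF_mono N, ?_, ?_, ?_, ?_⟩, ?_⟩
  · obtain ⟨n, hn⟩ := hN
    refine ⟨-(n : ℤ), le_bot_iff.mp (monoF_le N fun i m z hm hm0 _ => ?_)⟩
    have : N ^ i = 0 := pow_eq_zero_of_le (show n ≤ i by omega) hn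
    simp [this]
  · obtain ⟨n, hn⟩ := hN
    exact ⟨n, eq_top_iff.mpr fun x _ => monoF_ker N n (by omega) (by simp [hn])⟩
  · rintro i _ ⟨z, hz, rfl⟩
    exact monoF_shift N rfl hz
  · intro i h
    refine ⟨le_antisymm ?_ ?_, ?_⟩
    · rintro _ ⟨_, ⟨x, hx, rfl⟩, rfl⟩
      refine ⟨(N ^ i) x, ?_, by simp⟩
      exact shift_pow N (monoF N) (by rintro i _ ⟨z, hz, rfl⟩; exact monoF_shift N rfl hz)
          i i _ (by ring) x hx
    · rintro _ ⟨y, hy, rfl⟩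
      obtain ⟨x, hx, rfl⟩ := monoF_surj N i rfl hy
      exact ⟨_, ⟨x, hx, rfl⟩, by simp⟩
    · rintro _ ⟨x, hx, rfl⟩ h0
      rw [Submodule.mkQ_apply, Submodule.mapQ_apply, Submodule.Quotient.mk_eq_zero] at h0
      rw [Submodule.mkQ_apply, Submodule.Quotient.mk_eq_zero]
      exact monoF_inj N i rfl rfl h0
  · rintro M ⟨hm, ⟨a, ha⟩, ⟨b, hb⟩, hs, hiso⟩
    have hh : ∀ i : ℕ, M ((i : ℤ) - 1) ≤ (M (-(i : ℤ) - 1)).comap (N ^ i) := fun i x hx =>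
      shift_pow N M hs i _ _ (by ring) x hx
    refine mono_unique N hN M hm ha hb hs ?_ ?_
    · intro i y hy
      have h1 : (M (-(i : ℤ) - 1)).mkQ y ∈ (M (-(i : ℤ))).map (M (-(i : ℤ) - 1)).mkQ :=
        ⟨y, hy, rfl⟩
      rw [← (hiso i (hh i)).1] at h1
      obtain ⟨_, ⟨x, hx, rfl⟩, e⟩ := h1
      rw [Submodule.mkQ_apply, Submodule.mapQ_apply, Submodule.mkQ_apply,
        Submodule.Quotient.eq] at e
      exact ⟨x, hx, e⟩
    · intro i x hx h0
      have := (hiso i (hh i)).2 _ ⟨x, hx, rfl⟩ (by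
        rw [Submodule.mkQ_apply, Submodule.mapQ_apply, Submodule.Quotient.mk_eq_zero]
        exact h0)
      rwa [Submodule.mkQ_apply, Submodule.Quotient.mk_eq_zero] at this
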